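/- Weak positivity of the high-order conservative multidimensional scheme (Theorem 4.4, one cell, one forward-Euler step): Let d = 2, N ≥ 1, |K| > 0, edge lengths ℓ₁,…,ℓ_N > 0 with perimeter |∂K| = Σⱼ ℓⱼ, unit outward normals ξ⁽¹⁾,…,ξ⁽ᴺ⁾ ∈ ℝ² with Σⱼ ℓⱼ ξ⁽ʲ⁾ = 0, and Q ≥ 1 edge-quadrature weights ω₁,…,ω_Q > 0 with Σ_q ω_q = 1. For each (j, q) let U_{jq}^{int}, U_{jq}^{ext} ∈ 𝒢, and suppose the cell average decomposes with positive weights as Ū = Σ_{q=1}^{Q̃} ϖ̃_q Ũ_q + Σ_{j=1}^{N} Σ_{q=1}^{Q} ϖ_{jq} U_{jq}^{int}, where Ũ_q ∈ 𝒢, ϖ̃_q > 0, ϖ_{jq} > 0, Σ_q ϖ̃_q + Σ_{j,q} ϖ_{jq} = 1. For each (j, q) let wave speeds satisfy σ_{jq}^{r} ≥ α_r(U_{jq}^{ext}, U_{jq}^{int}; ξ⁽ʲ⁾) and σ_{jq}^{l} ≤ α_l(U_{jq}^{int}, U_{jq}^{ext}; ξ⁽ʲ⁾), with σ_{jq}^{±}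 the clamped speeds. Define α̂_{jq} = max{ ⟨ξ⁽ʲ⁾, v_{jq}^{int}⟩ , |∂K|⁻¹ Σ_{i=1}^{N} ℓᵢ ⟨ξ⁽ʲ⁾ − ξ⁽ⁱ⁾, (√ρ_{jq}^{int} v_{jq}^{int} + √ρ_{iq}^{int} v_{iq}^{int})/(√ρ_{jq}^{int} + √ρ_{iq}^{int})⟩ } + 𝒞(U_{jq}^{int}; ξ⁽ʲ⁾) + 2|∂K|⁻¹ Σ_{i=1}^{N} ℓᵢ |B_{jq}^{int} − B_{iq}^{int}|/(√ρ_{jq}^{int} + √ρ_{iq}^{int}). Let Δt > 0 satisfy Δt·(ℓⱼ/|K|)·(α̂_{jq} − σ_{jq}^{−}) < ϖ_{jq}/ω_q for all j, q, and set Ū' = (ρ̄', m̄', B̄', Ē') = Ū − (Δt/|K|) Σ_{j,q} ℓⱼ ω_q F̂(U_{jq}^{int}, U_{jq}^{ext}; ξ⁽ʲ⁾). Then ρ̄' > 0 and 𝓔(Ū') > −Δt·(ρ̄')⁻¹·(m̄'·B̄')·div, where div = |K|⁻¹ Σ_{j,q} ℓⱼ ω_q ⟨ξ⁽ʲ⁾,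 (σ_{jq}^{+} B_{jq}^{int} − σ_{jq}^{−} B_{jq}^{ext})/(σ_{jq}^{+} − σ_{jq}^{−})⟩. In particular, if div = 0 then Ū' ∈ 𝒢. -/

import Mathlib

noncomputable section

open Finset

/-- An MHD state `U = (ρ, m, B, E)` viewed as a vector in `ℝ⁸`. -/
abbrev MHDState := Fin 8 → ℝ

namespace MHD

/-- Build a state from density, momentum, magnetic field, total energy. -/
def mk (ρ : ℝ) (m B : Fin 3 → ℝ) (E : ℝ) : MHDState :=
  ![ρ, m 0, m 1, m 2, B 0, B 1, B 2, E]

/-- Density component. -/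
def dens (U : MHDState) : ℝ := U 0

/-- Momentum components. -/
def mom (U : MHDState) : Fin 3 → ℝ := ![U 1, U 2, U 3]

/-- Magnetic field components. -/
def magB (U : MHDState) : Fin 3 → ℝ := ![U 4, U 5, U 6]

/-- Total energy component. -/
def toten (U : MHDState) : ℝ := U 7

/-- Euclidean dot product on `ℝ³`. -/
def dot3 (a b : Fin 3 → ℝ) : ℝ := ∑ k, a k * b k

/-- Squared Euclidean norm on `ℝ³`. -/
def sq3 (a : Fin 3 → ℝ) : ℝ := dot3 a a

/-- Euclidean norm on `ℝ³`. -/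
def norm3 (a : Fin 3 → ℝ) : ℝ := Real.sqrt (sq3 a)

/-- Velocity `v = m / ρ`. -/
def vel (U : MHDState) : Fin 3 → ℝ := fun k => mom U k / dens U

/-- Internal energy `𝓔(U) = E − (|m|²/ρ + |B|²)/2`. -/
def intE (U : MHDState) : ℝ := toten U - (sq3 (mom U) / dens U + sq3 (magB U)) / 2

/-- Specific internal energy `e = 𝓔(U)/ρ`. -/
def specE (U : MHDState) : ℝ := intE U / dens U

/-- The admissible state set `𝒢`. -/
def Gset : Set MHDState := {U | 0 < dens U ∧ 0 < intE U}

/-- The set `𝒢_ρ` of states with positive density. -/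
def Grho : Set MHDState := {U | 0 < dens U}

/-- Euclidean dot product on `ℝ⁸`. -/
def dot8 (U V : MHDState) : ℝ := ∑ i, U i * V i

/-- The vector `n* = (|v*|²/2, −v*, −B*, 1)`. -/
def nstar (vs Bs : Fin 3 → ℝ) : MHDState :=
  mk (sq3 vs / 2) (fun k => -vs k) (fun k => -Bs k) 1

/-- The set `𝒢*`. -/
def GstarSet : Set MHDState :=
  {U | 0 < dens U ∧ ∀ vs Bs : Fin 3 → ℝ, 0 < dot8 U (nstar vs Bs) + sq3 Bs / 2}

/-- Equation of state assumption: for `ρ > 0`, `e > 0 ↔ p(ρ,e) > 0`. -/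
def IsEOS (pfun : ℝ → ℝ → ℝ) : Prop :=
  ∀ ρ e : ℝ, 0 < ρ → (0 < e ↔ 0 < pfun ρ e)

/-- Pressure of a state, via the equation of state. -/
def pres (pfun : ℝ → ℝ → ℝ) (U : MHDState) : ℝ := pfun (dens U) (specE U)

/-- Total pressure `p + |B|²/2`. -/
def ptot (pfun : ℝ → ℝ → ℝ) (U : MHDState) : ℝ := pres pfun U + sq3 (magB U) / 2

/-- The `i`-th flux `F_i(U)`. -/
def flux (pfun : ℝ → ℝ → ℝ) (i : Fin 3) (U : MHDState) : MHDState :=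
  mk (dens U * vel U i)
    (fun k => dens U * vel U i * vel U k - magB U i * magB U k
      + ptot pfun U * (if k = i then 1 else 0))
    (fun k => vel U i * magB U k - magB U i * vel U k)
    (vel U i * (toten U + ptot pfun U) - magB U i * dot3 (vel U) (magB U))

/-- Directional inner product `⟨ξ, w⟩ = Σ_{k<d} ξ_k w_k` for `ξ ∈ ℝ^d`, `w ∈ ℝ³`, `d ≤ 3`. -/
def dirDot {d : ℕ} (hd : d ≤ 3) (ξ : Fin d → ℝ) (w : Fin 3 → ℝ) : ℝ :=
  ∑ k, ξ k * w (Fin.castLE hd k)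

/-- Directional flux `⟨ξ, F(U)⟩ = Σ_{i<d} ξ_i F_i(U)`. -/
def dirFlux (pfun : ℝ → ℝ → ℝ) {d : ℕ} (hd : d ≤ 3) (ξ : Fin d → ℝ) (U : MHDState) :
    MHDState :=
  ∑ i, ξ i • flux pfun (Fin.castLE hd i) U

/-- `ξ` is a unit vector. -/
def unitVec {d : ℕ} (ξ : Fin d → ℝ) : Prop := (∑ k, (ξ k) ^ 2) = 1

/-- `𝒞_s(U) = p / (ρ √(2e))`. -/
def soundC (pfun : ℝ → ℝ → ℝ) (U : MHDState) : ℝ :=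
  pres pfun U / (dens U * Real.sqrt (2 * specE U))

/-- `𝒞(U; ξ)`. -/
def waveC (pfun : ℝ → ℝ → ℝ) {d : ℕ} (hd : d ≤ 3) (ξ : Fin d → ℝ) (U : MHDState) : ℝ :=
  Real.sqrt ((soundC pfun U ^ 2 + sq3 (magB U) / dens U
    + Real.sqrt ((soundC pfun U ^ 2 + sq3 (magB U) / dens U) ^ 2
      - 4 * soundC pfun U ^ 2 * dirDot hd ξ (magB U) ^ 2 / dens U)) / 2)

/-- Roe-type averaged velocity `v̄ = (√ρ v + √ρ̃ ṽ)/(√ρ + √ρ̃)`. -/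
def roeV (U Ut : MHDState) : Fin 3 → ℝ := fun k =>
  (Real.sqrt (dens U) * vel U k + Real.sqrt (dens Ut) * vel Ut k)
    / (Real.sqrt (dens U) + Real.sqrt (dens Ut))

/-- `α_r(U, Ũ; ξ)`. -/
def alphaR (pfun : ℝ → ℝ → ℝ) {d : ℕ} (hd : d ≤ 3) (ξ : Fin d → ℝ) (U Ut : MHDState) : ℝ :=
  max (dirDot hd ξ (vel U)) (dirDot hd ξ (roeV U Ut)) + waveC pfun hd ξ U
    + norm3 (magB U - magB Ut) / (Real.sqrt (dens U) + Real.sqrt (dens Ut))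

/-- `α_l(U, Ũ; ξ)`. -/
def alphaL (pfun : ℝ → ℝ → ℝ) {d : ℕ} (hd : d ≤ 3) (ξ : Fin d → ℝ) (U Ut : MHDState) : ℝ :=
  min (dirDot hd ξ (vel U)) (dirDot hd ξ (roeV U Ut)) - waveC pfun hd ξ U
    - norm3 (magB U - magB Ut) / (Real.sqrt (dens U) + Real.sqrt (dens Ut))

/-- `α_⋆(U, Ũ; ξ)`. -/
def alphaS (pfun : ℝ → ℝ → ℝ) {d : ℕ} (hd : d ≤ 3) (ξ : Fin d → ℝ) (U Ut : MHDState) : ℝ :=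
  max (|dirDot hd ξ (vel U)|) (|dirDot hd ξ (roeV U Ut)|) + waveC pfun hd ξ U
    + norm3 (magB U - magB Ut) / (Real.sqrt (dens U) + Real.sqrt (dens Ut))

/-- The vector `θ(U, v*, B*) = 2^{−1/2}(B − B*, √ρ(v − v*), √(2ρe)) ∈ ℝ⁷`. -/
def theta (U : MHDState) (vs Bs : Fin 3 → ℝ) : Fin 7 → ℝ :=
  ![(magB U 0 - Bs 0) / Real.sqrt 2,
    (magB U 1 - Bs 1) / Real.sqrt 2,
    (magB U 2 - Bs 2) / Real.sqrt 2,
    Real.sqrt (dens U) * (vel U 0 - vs 0) / Real.sqrt 2,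
    Real.sqrt (dens U) * (vel U 1 - vs 1) / Real.sqrt 2,
    Real.sqrt (dens U) * (vel U 2 - vs 2) / Real.sqrt 2,
    Real.sqrt (2 * intE U) / Real.sqrt 2]

/-- `|θ|²`. -/
def thetaSq (U : MHDState) (vs Bs : Fin 3 → ℝ) : ℝ := ∑ k, theta U vs Bs k ^ 2

/-- Godunov–Powell source vector `S(U) = (0, B, v, v·B)`. -/
def source (U : MHDState) : MHDState := mk 0 (magB U) (vel U) (dot3 (vel U) (magB U))

/-- HLL numerical flux with clamped wave speeds `σm ≤ 0 ≤ σp`. -/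
def hllFlux (pfun : ℝ → ℝ → ℝ) {d : ℕ} (hd : d ≤ 3) (ξ : Fin d → ℝ)
    (Um Up : MHDState) (σm σp : ℝ) : MHDState :=
  (σp - σm)⁻¹ • (σp • dirFlux pfun hd ξ Um - σm • dirFlux pfun hd ξ Up
    + (σm * σp) • (Up - Um))

/-- HLL intermediate state `H(U⁻, U⁺; ξ)`. -/
def hllMid (pfun : ℝ → ℝ → ℝ) {d : ℕ} (hd : d ≤ 3) (ξ : Fin d → ℝ)
    (Um Up : MHDState) (σm σp : ℝ) : MHDState :=
  (σp - σm)⁻¹ • (σp • Up - dirFlux pfun hd ξ Up - σm • Um + dirFlux pfun hd ξ Um)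

/-- The quantity `α̂_j` of Theorem 2.3. -/
def alphaHat (pfun : ℝ → ℝ → ℝ) {d : ℕ} (hd : d ≤ 3) {N : ℕ}
    (s : Fin N → ℝ) (ξ : Fin N → Fin d → ℝ) (U : Fin N → MHDState) (j : Fin N) : ℝ :=
  max (dirDot hd (ξ j) (vel (U j)))
      ((∑ i, s i)⁻¹ * ∑ i, s i * dirDot hd (fun k => ξ j k - ξ i k) (roeV (U j) (U i)))
  + waveC pfun hd (ξ j) (U j)
  + 2 * (∑ i, s i)⁻¹ * ∑ i, s i *
      (norm3 (magB (U j) - magB (U i)) / (Real.sqrt (dens (U j)) + Real.sqrt (dens (U i))))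

def d1le3 : (1 : ℕ) ≤ 3 := by omega
def d2le3 : (2 : ℕ) ≤ 3 := by omega

/-- In one dimension the direction `ξ = 1`. -/
def xi1 : Fin 1 → ℝ := fun _ => 1

/-- Kinetic part `ρ|v − v*|²/2` of `|θ|²`. -/
def kinPart (U : MHDState) (vs : Fin 3 → ℝ) : ℝ := dens U * sq3 (vel U - vs) / 2

/-- Magnetic part `|B − B*|²/2` of `|θ|²`. -/
def magPart (U : MHDState) (Bs : Fin 3 → ℝ) : ℝ := sq3 (magB U - Bs) / 2

/-- The quantity `|θ|²`, as the sum of its kinetic, magnetic and internal parts. -/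
def energyPart (U : MHDState) (vs Bs : Fin 3 → ℝ) : ℝ :=
  kinPart U vs + magPart U Bs + intE U

/-- The part of `⟨ξ, F(U)⟩ · n*` that is controlled by the wave speed `𝒞(U; ξ)`. -/
def waveForm (pfun : ℝ → ℝ → ℝ) (ξ : Fin 2 → ℝ) (U : MHDState) (vs Bs : Fin 3 → ℝ) : ℝ :=
  dirDot d2le3 ξ (vel U - vs) * (pres pfun U + dot3 (magB U) (magB U - Bs))
    - dirDot d2le3 ξ (magB U) * dot3 (vel U - vs) (magB U - Bs)

/-- Weight of the jump of the magnetic field in the wave speeds. -/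
def jumpB (U Ut : MHDState) : ℝ :=
  norm3 (magB U - magB Ut) / (Real.sqrt (dens U) + Real.sqrt (dens Ut))

lemma dirDot_two (ξ : Fin 2 → ℝ) (w : Fin 3 → ℝ) :
    dirDot d2le3 ξ w = ξ 0 * w 0 + ξ 1 * w 1 := by
  simp [dirDot, Fin.sum_univ_two]

lemma dot3_eq (a b : Fin 3 → ℝ) : dot3 a b = a 0 * b 0 + a 1 * b 1 + a 2 * b 2 := by
  simp [dot3, Fin.sum_univ_three]

lemma sq3_eq (a : Fin 3 → ℝ) : sq3 a = a 0 ^ 2 + a 1 ^ 2 + a 2 ^ 2 := by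
  simp only [sq3, dot3_eq]; ring

lemma sq3_nonneg (a : Fin 3 → ℝ) : 0 ≤ sq3 a := by
  rw [sq3_eq]; positivity

lemma dot3_sq_le (a b : Fin 3 → ℝ) : dot3 a b ^ 2 ≤ sq3 a * sq3 b := by
  have h := Finset.sum_mul_sq_le_sq_mul_sq Finset.univ a b
  simpa [dot3, sq3, sq] using h

lemma dirDot_sq_le (ξ : Fin 2 → ℝ) (w : Fin 3 → ℝ) :
    dirDot d2le3 ξ w ^ 2 ≤ (∑ k, ξ k ^ 2) * sq3 w := by
  rw [dirDot_two, sq3_eq, Fin.sum_univ_two]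
  nlinarith [sq_nonneg (ξ 0 * w 1 - ξ 1 * w 0), sq_nonneg (ξ 0 * w 2), sq_nonneg (ξ 1 * w 2)]

lemma kinPart_nonneg {U : MHDState} (hU : 0 < dens U) (vs : Fin 3 → ℝ) : 0 ≤ kinPart U vs :=
  div_nonneg (mul_nonneg hU.le (sq3_nonneg _)) zero_le_two

lemma magPart_nonneg (U : MHDState) (Bs : Fin 3 → ℝ) : 0 ≤ magPart U Bs :=
  div_nonneg (sq3_nonneg _) zero_le_two

lemma energyPart_pos {U : MHDState} (hU : U ∈ Gset) (vs Bs : Fin 3 → ℝ) :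
    0 < energyPart U vs Bs := by
  have h₁ := kinPart_nonneg hU.1 vs
  have h₂ := magPart_nonneg U Bs
  have h₃ := hU.2
  unfold energyPart; linarith

lemma jumpB_nonneg (U Ut : MHDState) : 0 ≤ jumpB U Ut := by
  unfold jumpB norm3; positivity

lemma sq3_sub_comm (a b : Fin 3 → ℝ) : sq3 (a - b) = sq3 (b - a) := by
  simp only [sq3_eq, Pi.sub_apply]; ring

lemma jumpB_comm (U Ut : MHDState) : jumpB U Ut = jumpB Ut U := by
  unfold jumpB norm3
  rw [sq3_sub_comm, add_comm]

lemma roeV_comm (U Ut : MHDState) : roeV U Ut = roeV Ut U := by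
  funext k; unfold roeV
  rw [add_comm, add_comm (Real.sqrt (dens U))]

lemma dot8_eq (U V : MHDState) : dot8 U V = U 0 * V 0 + U 1 * V 1 + U 2 * V 2 + U 3 * V 3
    + U 4 * V 4 + U 5 * V 5 + U 6 * V 6 + U 7 * V 7 := by
  simp [dot8, Fin.sum_univ_eight]

lemma mom_eq {U : MHDState} (hU : 0 < dens U) (k : Fin 3) : mom U k = dens U * vel U k := by
  unfold vel; field_simp

lemma dot8_nstar (U : MHDState) (vs Bs : Fin 3 → ℝ) :
    dot8 U (nstar vs Bs) = dens U * (sq3 vs / 2) - dot3 (mom U) vs - dot3 (magB U) Bs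
      + toten U := by
  simp [dot8_eq, nstar, mk, dens, mom, magB, toten, dot3_eq]
  ring

lemma dot8_nstar_state {U : MHDState} (hU : 0 < dens U) (vs Bs : Fin 3 → ℝ) :
    dot8 U (nstar vs Bs) = energyPart U vs Bs - sq3 Bs / 2 := by
  rw [dot8_nstar]
  have hρ := hU.ne'
  have h : sq3 (mom U) / dens U = dens U * sq3 (vel U) := by
    simp only [sq3_eq, mom_eq hU]; field_simp
  unfold energyPart intE kinPart magPart
  rw [h]
  simp only [dot3_eq, sq3_eq, mom_eq hU, Pi.sub_apply]
  ring

lemma dot8_nstar_self {U : MHDState} (hU : 0 < dens U) :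
    dot8 U (nstar (vel U) (magB U)) = intE U - sq3 (magB U) / 2 := by
  rw [dot8_nstar_state hU]
  simp [energyPart, kinPart, magPart, sq3_eq]

lemma dot8_add (U V W : MHDState) : dot8 (U + V) W = dot8 U W + dot8 V W :=
  add_dotProduct U V W

lemma dot8_sub (U V W : MHDState) : dot8 (U - V) W = dot8 U W - dot8 V W :=
  sub_dotProduct U V W

lemma dot8_smul (c : ℝ) (U W : MHDState) : dot8 (c • U) W = c * dot8 U W :=
  smul_dotProduct c U W

lemma dot8_sum {ι : Type*} (s : Finset ι) (U : ι → MHDState) (W : MHDState) :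
    dot8 (∑ i ∈ s, U i) W = ∑ i ∈ s, dot8 (U i) W :=
  sum_dotProduct s U W

lemma dot8_nstar_flux (pfun : ℝ → ℝ → ℝ) {U : MHDState} (hU : 0 < dens U) (ξ : Fin 2 → ℝ)
    (vs Bs : Fin 3 → ℝ) :
    dot8 (dirFlux pfun d2le3 ξ U) (nstar vs Bs) =
      dirDot d2le3 ξ (vel U) * (kinPart U vs + intE U) + dirDot d2le3 ξ vs * magPart U Bs
        + waveForm pfun ξ U vs Bs + dirDot d2le3 ξ (magB U) * dot3 vs Bs
        - dirDot d2le3 ξ vs * (sq3 Bs / 2) := by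
  have hρ := hU.ne'
  have hE : toten U = intE U + (dens U * sq3 (vel U) + sq3 (magB U)) / 2 := by
    have h : sq3 (mom U) / dens U = dens U * sq3 (vel U) := by
      simp only [sq3_eq, mom_eq hU]; field_simp
    unfold intE; rw [h]; ring
  simp only [dirFlux, Fin.sum_univ_two, dot8_nstar]
  simp only [flux, hE, waveForm, kinPart, magPart, ptot, dirDot_two, dot3_eq, sq3_eq,
    Pi.sub_apply]
  simp [mk, dens, mom, magB, toten]
  ring

/-- The larger root of the characteristic polynomial of the magnetosonic speeds dominates the
associated quadratic form. -/
lemma fast_speed_form_le {c a bx W Bt d L S : ℝ} (hS : S = c ^ 2 + Bt) (ha : a ^ 2 ≤ W)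
    (hb : bx ^ 2 ≤ Bt) (hd : (d - bx * a) ^ 2 ≤ (Bt - bx ^ 2) * (W - a ^ 2))
    (hL : L ^ 2 = S * L - c ^ 2 * bx ^ 2) (hLS : S ≤ 2 * L) :
    c ^ 2 * a ^ 2 + a ^ 2 * Bt - 2 * a * bx * d + bx ^ 2 * W ≤ L * W := by
  have hroot : ∀ x, x ^ 2 - S * x + c ^ 2 * bx ^ 2 ≤ 0 → x ≤ L := by
    intro x hx
    by_contra! h
    nlinarith [mul_pos (sub_pos.2 h) (show 0 < x + L - S by linarith)]
  have hR : 0 ≤ L - bx ^ 2 := by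
    refine sub_nonneg.2 (hroot _ ?_)
    rw [hS]; nlinarith [mul_nonneg (sq_nonneg bx) (sub_nonneg.2 hb)]
  have hP : 0 ≤ L - (c ^ 2 + (Bt - bx ^ 2)) := by
    refine sub_nonneg.2 (hroot _ ?_)
    rw [hS]; nlinarith [mul_nonneg (sq_nonneg bx) (sub_nonneg.2 hb)]
  have hPR : (L - (c ^ 2 + (Bt - bx ^ 2))) * (L - bx ^ 2) = bx ^ 2 * (Bt - bx ^ 2) := by
    rw [hS] at hL; linear_combination hL
  set P := L - (c ^ 2 + (Bt - bx ^ 2)) with hPdef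
  set R := L - bx ^ 2 with hRdef
  have hw : 0 ≤ W - a ^ 2 := sub_nonneg.2 ha
  have hcross : |2 * (bx * a * (d - bx * a))| ≤ P * a ^ 2 + R * (W - a ^ 2) := by
    refine abs_le_of_sq_le_sq ?_ (by positivity)
    have h₁ : (bx * a) ^ 2 * (d - bx * a) ^ 2
        ≤ (bx * a) ^ 2 * ((Bt - bx ^ 2) * (W - a ^ 2)) :=
      mul_le_mul_of_nonneg_left hd (sq_nonneg _)
    have h₂ : (bx * a) ^ 2 * ((Bt - bx ^ 2) * (W - a ^ 2))
        = (P * a ^ 2) * (R * (W - a ^ 2)) := by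
      linear_combination -(a ^ 2 * (W - a ^ 2)) * hPR
    nlinarith [sq_nonneg (P * a ^ 2 - R * (W - a ^ 2))]
  have h := neg_le_of_abs_le hcross
  rw [hPdef, hRdef] at h
  nlinarith [h]

lemma perp_gram_le {ξ : Fin 2 → ℝ} (hξ : unitVec ξ) (β w : Fin 3 → ℝ) :
    (dot3 β w - dirDot d2le3 ξ β * dirDot d2le3 ξ w) ^ 2
      ≤ (sq3 β - dirDot d2le3 ξ β ^ 2) * (sq3 w - dirDot d2le3 ξ w ^ 2) := by
  have h1 : ξ 0 ^ 2 + ξ 1 ^ 2 = 1 := by simpa [unitVec, Fin.sum_univ_two] using hξ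
  let e : Fin 3 → ℝ := ![ξ 0, ξ 1, 0]
  have h := dot3_sq_le (β - dirDot d2le3 ξ β • e) (w - dirDot d2le3 ξ w • e)
  have e1 : ∀ x y : Fin 3 → ℝ, dot3 (x - dirDot d2le3 ξ x • e) (y - dirDot d2le3 ξ y • e)
      = dot3 x y - dirDot d2le3 ξ x * dirDot d2le3 ξ y := by
    intro x y
    simp only [dot3_eq, dirDot_two, Pi.sub_apply, Pi.smul_apply, smul_eq_mul]
    simp [e]
    linear_combination (ξ 0 * x 0 + ξ 1 * x 1) * (ξ 0 * y 0 + ξ 1 * y 1) * h1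
  unfold sq3 at h
  rw [e1, e1, e1] at h
  simpa [sq3, sq] using h

lemma dirDot_sq_le_of_unit {ξ : Fin 2 → ℝ} (hξ : unitVec ξ) (w : Fin 3 → ℝ) :
    dirDot d2le3 ξ w ^ 2 ≤ sq3 w := by
  have h := dirDot_sq_le ξ w
  rwa [show ∑ k, ξ k ^ 2 = 1 from hξ, one_mul] at h

lemma waveC_nonneg (pfun : ℝ → ℝ → ℝ) (ξ : Fin 2 → ℝ) (U : MHDState) :
    0 ≤ waveC pfun d2le3 ξ U := Real.sqrt_nonneg _

lemma soundC_pos {pfun : ℝ → ℝ → ℝ} (hEOS : IsEOS pfun) {U : MHDState} (hU : U ∈ Gset) :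
    0 < soundC pfun U := by
  have he : 0 < specE U := div_pos hU.2 hU.1
  have hp : 0 < pres pfun U := (hEOS _ _ hU.1).1 he
  have hρ := hU.1
  unfold soundC; positivity

lemma waveC_pos {pfun : ℝ → ℝ → ℝ} (hEOS : IsEOS pfun) (ξ : Fin 2 → ℝ) {U : MHDState}
    (hU : U ∈ Gset) : 0 < waveC pfun d2le3 ξ U := by
  have hc := soundC_pos hEOS hU
  have hB := div_nonneg (sq3_nonneg (magB U)) hU.1.le
  unfold waveC; positivity

/-- The defining properties of the fast magnetosonic speed. -/
lemma waveC_sq_spec (pfun : ℝ → ℝ → ℝ) {ξ : Fin 2 → ℝ} (hξ : unitVec ξ) {U : MHDState}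
    (hU : 0 < dens U) :
    (waveC pfun d2le3 ξ U ^ 2) ^ 2 =
        (soundC pfun U ^ 2 + sq3 (magB U) / dens U) * waveC pfun d2le3 ξ U ^ 2
          - soundC pfun U ^ 2 * (dirDot d2le3 ξ (magB U) ^ 2 / dens U) ∧
      soundC pfun U ^ 2 + sq3 (magB U) / dens U ≤ 2 * waveC pfun d2le3 ξ U ^ 2 := by
  have hb : dirDot d2le3 ξ (magB U) ^ 2 / dens U ≤ sq3 (magB U) / dens U :=
    div_le_div_of_nonneg_right (dirDot_sq_le_of_unit hξ _) hU.le
  have hB := div_nonneg (sq3_nonneg (magB U)) hU.le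
  set c := soundC pfun U
  have hT : 4 * c ^ 2 * dirDot d2le3 ξ (magB U) ^ 2 / dens U
      = 4 * c ^ 2 * (dirDot d2le3 ξ (magB U) ^ 2 / dens U) := by ring
  unfold waveC
  rw [hT]
  set S := c ^ 2 + sq3 (magB U) / dens U with hS
  set b := dirDot d2le3 ξ (magB U) ^ 2 / dens U
  have hS0 : 0 ≤ S := by positivity
  have hdisc : 0 ≤ S ^ 2 - 4 * c ^ 2 * b := by
    have := mul_le_mul_of_nonneg_left hb (sq_nonneg c)
    rw [hS]
    nlinarith [sq_nonneg (c ^ 2 - sq3 (magB U) / dens U)]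
  have hr := Real.sq_sqrt hdisc
  have hr0 := Real.sqrt_nonneg (S ^ 2 - 4 * c ^ 2 * b)
  rw [Real.sq_sqrt (by positivity)]
  constructor
  · linear_combination hr / 4
  · linarith

lemma abs_waveForm_le (pfun : ℝ → ℝ → ℝ) {ξ : Fin 2 → ℝ} (hξ : unitVec ξ) {U : MHDState}
    (hU : U ∈ Gset) (vs Bs : Fin 3 → ℝ) :
    |waveForm pfun ξ U vs Bs| ≤ waveC pfun d2le3 ξ U * energyPart U vs Bs := by
  obtain ⟨hρ, hE⟩ := hU
  obtain ⟨hL, hLS⟩ := waveC_sq_spec pfun hξ hρ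
  have hl0 := waveC_nonneg pfun ξ U
  set l := waveC pfun d2le3 ξ U
  have hr : 0 < Real.sqrt (dens U) := Real.sqrt_pos.2 hρ
  have hr2 : Real.sqrt (dens U) ^ 2 = dens U := Real.sq_sqrt hρ.le
  have he : 0 < specE U := div_pos hE hρ
  have hu : 0 < Real.sqrt (2 * specE U) := Real.sqrt_pos.2 (by linarith)
  have hu2 : Real.sqrt (2 * specE U) ^ 2 = 2 * specE U := Real.sq_sqrt (by linarith)
  set r := Real.sqrt (dens U)
  set u := Real.sqrt (2 * specE U) with hudef
  have hEe : intE U = r ^ 2 * u ^ 2 / 2 := by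
    rw [hr2, hu2, specE]; field_simp
  set c := soundC pfun U with hc
  have hp : pres pfun U = c * (r ^ 2 * u) := by
    rw [hc, soundC, ← hudef, hr2]; field_simp
  set w : Fin 3 → ℝ := vel U - vs
  set b : Fin 3 → ℝ := magB U - Bs
  set β : Fin 3 → ℝ := fun k => magB U k / r with hβdef
  have hβ : ∀ k, magB U k = r * β k := by intro k; rw [hβdef]; field_simp
  have hβsq : sq3 (magB U) / dens U = sq3 β := by
    rw [← hr2, sq3_eq, sq3_eq, hβ, hβ, hβ]; field_simp
  have hβd : dirDot d2le3 ξ (magB U) = r * dirDot d2le3 ξ β := by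
    rw [dirDot_two, dirDot_two, hβ, hβ]; ring
  have hβd2 : dirDot d2le3 ξ (magB U) ^ 2 / dens U = dirDot d2le3 ξ β ^ 2 := by
    rw [← hr2, hβd]; field_simp
  have hβb : dot3 (magB U) b = r * dot3 β b := by
    rw [dot3_eq, dot3_eq, hβ, hβ, hβ]; ring
  rw [hβsq] at hL hLS
  rw [hβd2] at hL
  have key := fast_speed_form_le rfl (dirDot_sq_le_of_unit hξ w) (dirDot_sq_le_of_unit hξ β)
    (perp_gram_le hξ β w) hL hLS
  set a := dirDot d2le3 ξ w
  set bx := dirDot d2le3 ξ β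
  let X : Fin 3 → ℝ := a • β - bx • w
  have hX : c ^ 2 * a ^ 2 + sq3 X ≤ l ^ 2 * sq3 w := by
    refine le_trans (le_of_eq ?_) key
    simp only [X, sq3_eq, dot3_eq, Pi.sub_apply, Pi.smul_apply, smul_eq_mul]; ring
  have hform : waveForm pfun ξ U vs Bs = r * (c * a * (r * u) + dot3 X b) := by
    unfold waveForm
    change a * (pres pfun U + dot3 (magB U) b) - dirDot d2le3 ξ (magB U) * dot3 w b = _
    rw [hp, hβb, hβd]
    simp only [X, dot3_eq, Pi.sub_apply, Pi.smul_apply, smul_eq_mul]; ring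
  have hen : energyPart U vs Bs = (r ^ 2 * sq3 w + (sq3 b + (r * u) ^ 2)) / 2 := by
    unfold energyPart kinPart magPart
    rw [hEe, ← hr2]; ring
  have hw := sq3_nonneg w
  have hb := sq3_nonneg b
  have hXn := sq3_nonneg X
  rw [hform, hen]
  refine abs_le_of_sq_le_sq ?_ (by positivity)
  have h₁ : (c * a * (r * u) + dot3 X b) ^ 2
      ≤ (c ^ 2 * a ^ 2 + sq3 X) * (sq3 b + (r * u) ^ 2) := by
    have h := Finset.sum_mul_sq_le_sq_mul_sq Finset.univ ![c * a, X 0, X 1, X 2]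
      ![r * u, b 0, b 1, b 2]
    simp [Fin.sum_univ_four] at h
    rw [dot3_eq, sq3_eq, sq3_eq]
    linarith
  have h₂ : (c ^ 2 * a ^ 2 + sq3 X) * (sq3 b + (r * u) ^ 2)
      ≤ l ^ 2 * sq3 w * (sq3 b + (r * u) ^ 2) :=
    mul_le_mul_of_nonneg_right hX (by positivity)
  have h₃ := mul_le_mul_of_nonneg_left (h₁.trans h₂) (sq_nonneg r)
  nlinarith [mul_nonneg (sq_nonneg l) (sq_nonneg (r ^ 2 * sq3 w - (sq3 b + (r * u) ^ 2)))]

/-- The jump of the magnetic part, weighted by the deviation of `v*` from the averaged velocity. -/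
lemma abs_roe_deviation_mul_jump_le {U Ut : MHDState} (hU : U ∈ Gset) (hUt : Ut ∈ Gset)
    {κ : ℝ} (hκ : 0 ≤ κ) {η : Fin 2 → ℝ} (hη : ∑ k, η k ^ 2 ≤ κ ^ 2) (vs Bs : Fin 3 → ℝ) :
    |(dirDot d2le3 η vs - dirDot d2le3 η (roeV U Ut)) * (magPart U Bs - magPart Ut Bs)|
      ≤ κ * jumpB U Ut * (energyPart U vs Bs + energyPart Ut vs Bs) := by
  have hr := Real.sqrt_pos.2 hU.1
  have hrt := Real.sqrt_pos.2 hUt.1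
  have hspeed : ∀ V : MHDState, V ∈ Gset →
      |Real.sqrt (dens V) * dirDot d2le3 η (vel V - vs)| ≤ κ * Real.sqrt (2 * kinPart V vs) := by
    intro V hV
    have hk := kinPart_nonneg hV.1 vs
    refine abs_le_of_sq_le_sq ?_ (by positivity)
    rw [mul_pow, mul_pow, Real.sq_sqrt hV.1.le, Real.sq_sqrt (by positivity)]
    have h := (dirDot_sq_le η (vel V - vs)).trans
      (mul_le_mul_of_nonneg_right hη (sq3_nonneg (vel V - vs)))
    have h' := mul_le_mul_of_nonneg_left h hV.1.le
    unfold kinPart; linarith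
  have hmag : ∀ V : MHDState, |dot3 (magB U - magB Ut) (magB V - Bs)|
      ≤ norm3 (magB U - magB Ut) * Real.sqrt (2 * magPart V Bs) := by
    intro V
    have hm := magPart_nonneg V Bs
    refine abs_le_of_sq_le_sq ?_ (by unfold norm3; positivity)
    rw [mul_pow, norm3, Real.sq_sqrt (sq3_nonneg _), Real.sq_sqrt (by positivity)]
    refine (dot3_sq_le _ _).trans (le_of_eq ?_)
    unfold magPart; ring
  have e₁ : dirDot d2le3 η vs - dirDot d2le3 η (roeV U Ut)
      = -(Real.sqrt (dens U) * dirDot d2le3 η (vel U - vs)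
        + Real.sqrt (dens Ut) * dirDot d2le3 η (vel Ut - vs))
        / (Real.sqrt (dens U) + Real.sqrt (dens Ut)) := by
    simp only [dirDot_two, roeV, Pi.sub_apply]
    field_simp
    ring
  have e₂ : magPart U Bs - magPart Ut Bs
      = (dot3 (magB U - magB Ut) (magB U - Bs) + dot3 (magB U - magB Ut) (magB Ut - Bs)) / 2 := by
    simp only [magPart, sq3_eq, dot3_eq, Pi.sub_apply]; ring
  have hks := Real.sq_sqrt (mul_nonneg zero_le_two (kinPart_nonneg hU.1 vs))
  have hkts := Real.sq_sqrt (mul_nonneg zero_le_two (kinPart_nonneg hUt.1 vs))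
  have hms := Real.sq_sqrt (mul_nonneg zero_le_two (magPart_nonneg U Bs))
  have hmts := Real.sq_sqrt (mul_nonneg zero_le_two (magPart_nonneg Ut Bs))
  have hs₁ := hspeed U hU
  have hs₂ := hspeed Ut hUt
  have hm₁ := hmag U
  have hm₂ := hmag Ut
  set x := Real.sqrt (2 * kinPart U vs)
  set xt := Real.sqrt (2 * kinPart Ut vs)
  set y := Real.sqrt (2 * magPart U Bs)
  set yt := Real.sqrt (2 * magPart Ut Bs)
  have hE := hU.2
  have hEt := hUt.2
  have hδ := jumpB_nonneg U Ut
  have hn : 0 ≤ norm3 (magB U - magB Ut) := Real.sqrt_nonneg _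
  have hxy : (x + xt) * (y + yt) / 2 ≤ energyPart U vs Bs + energyPart Ut vs Bs := by
    unfold energyPart
    nlinarith [sq_nonneg (x + xt - (y + yt)), sq_nonneg (x - xt), sq_nonneg (y - yt)]
  rw [e₁, e₂, abs_mul, abs_div, abs_div, abs_neg,
    abs_of_pos (show 0 < Real.sqrt (dens U) + Real.sqrt (dens Ut) by positivity),
    abs_of_pos (zero_lt_two' ℝ)]
  calc _ ≤ (κ * x + κ * xt) / (Real.sqrt (dens U) + Real.sqrt (dens Ut))
        * ((norm3 (magB U - magB Ut) * y + norm3 (magB U - magB Ut) * yt) / 2) := by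
        gcongr
        · exact (abs_add_le _ _).trans (add_le_add hs₁ hs₂)
        · exact (abs_add_le _ _).trans (add_le_add hm₁ hm₂)
    _ = κ * jumpB U Ut * ((x + xt) * (y + yt) / 2) := by unfold jumpB; ring
    _ ≤ _ := by gcongr

/-- Nonnegativity of the HLL intermediate state, tested against `n*`, up to the divergence term. -/
lemma two_state_nonneg (pfun : ℝ → ℝ → ℝ) {ξ : Fin 2 → ℝ} (hξ : unitVec ξ) {Um Up : MHDState}
    (hm : Um ∈ Gset) (hp : Up ∈ Gset) {σm σp : ℝ} (hσm : σm ≤ alphaL pfun d2le3 ξ Um Up)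
    (hσp : alphaR pfun d2le3 ξ Up Um ≤ σp) (vs Bs : Fin 3 → ℝ) :
    -((dirDot d2le3 ξ (magB Up) - dirDot d2le3 ξ (magB Um)) * dot3 vs Bs)
      ≤ σp * energyPart Up vs Bs - σm * energyPart Um vs Bs
        - dot8 (dirFlux pfun d2le3 ξ Up) (nstar vs Bs)
        + dot8 (dirFlux pfun d2le3 ξ Um) (nstar vs Bs) := by
  rw [dot8_nstar_flux pfun hp.1, dot8_nstar_flux pfun hm.1]
  have hfp := le_of_abs_le (abs_waveForm_le pfun hξ hp vs Bs)
  have hfm := neg_le_of_abs_le (abs_waveForm_le pfun hξ hm vs Bs)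
  have hdev := le_of_abs_le (abs_roe_deviation_mul_jump_le hp hm zero_le_one
    (by rw [show ∑ k, ξ k ^ 2 = 1 from hξ]; norm_num) vs Bs)
  have htp := mul_le_mul_of_nonneg_right hσp (energyPart_pos hp vs Bs).le
  have htm := mul_le_mul_of_nonneg_right hσm (energyPart_pos hm vs Bs).le
  have hkp := add_nonneg (kinPart_nonneg hp.1 vs) hp.2.le
  have hkm := add_nonneg (kinPart_nonneg hm.1 vs) hm.2.le
  have hmp := magPart_nonneg Up Bs
  have hmm := magPart_nonneg Um Bs
  have a₁ := mul_le_mul_of_nonneg_right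
    (le_max_left (dirDot d2le3 ξ (vel Up)) (dirDot d2le3 ξ (roeV Up Um))) hkp
  have a₂ := mul_le_mul_of_nonneg_right
    (le_max_right (dirDot d2le3 ξ (vel Up)) (dirDot d2le3 ξ (roeV Up Um))) hmp
  have b₁ := mul_le_mul_of_nonneg_right
    (min_le_left (dirDot d2le3 ξ (vel Um)) (dirDot d2le3 ξ (roeV Um Up))) hkm
  have b₂ := mul_le_mul_of_nonneg_right
    (min_le_right (dirDot d2le3 ξ (vel Um)) (dirDot d2le3 ξ (roeV Um Up))) hmm
  have ep : energyPart Up vs Bs = kinPart Up vs + magPart Up Bs + intE Up := rfl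
  have em : energyPart Um vs Bs = kinPart Um vs + magPart Um Bs + intE Um := rfl
  unfold alphaR at htp
  unfold alphaL at htm
  change (max _ _ + _ + jumpB Up Um) * _ ≤ _ at htp
  change _ ≤ (min _ _ - _ - jumpB Um Up) * _ at htm
  rw [roeV_comm Um Up] at htm b₁ b₂
  rw [jumpB_comm Um Up] at htm
  generalize energyPart Up vs Bs = tp at *
  generalize energyPart Um vs Bs = tm at *
  generalize max (dirDot d2le3 ξ (vel Up)) (dirDot d2le3 ξ (roeV Up Um)) = Mx at *
  generalize min (dirDot d2le3 ξ (vel Um)) (dirDot d2le3 ξ (roeV Up Um)) = Mn at *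
  have c₁ : Mx * tp = Mx * (kinPart Up vs + intE Up) + Mx * magPart Up Bs := by rw [ep]; ring
  have c₂ : Mn * tm = Mn * (kinPart Um vs + intE Um) + Mn * magPart Um Bs := by rw [em]; ring
  linarith

lemma alphaR_sub_alphaL_pos {pfun : ℝ → ℝ → ℝ} (hEOS : IsEOS pfun) (ξ : Fin 2 → ℝ)
    {Um Up : MHDState} (hm : Um ∈ Gset) (hp : Up ∈ Gset) :
    alphaL pfun d2le3 ξ Um Up < alphaR pfun d2le3 ξ Up Um := by
  have h₁ := waveC_pos hEOS ξ hm
  have h₂ := waveC_pos hEOS ξ hp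
  have h₃ := jumpB_nonneg Up Um
  have h₄ := jumpB_nonneg Um Up
  have h₅ := (min_le_right (dirDot d2le3 ξ (vel Um)) (dirDot d2le3 ξ (roeV Um Up)))
  have h₆ := (le_max_right (dirDot d2le3 ξ (vel Up)) (dirDot d2le3 ξ (roeV Up Um)))
  rw [roeV_comm Up Um] at h₆
  unfold alphaL alphaR
  rw [roeV_comm Up Um]
  change min _ _ - _ - jumpB Um Up < max _ _ + _ + jumpB Up Um
  linarith

/-- Upper bound for the HLL flux tested against `n*`. -/
lemma dot8_hllFlux_le (pfun : ℝ → ℝ → ℝ) {ξ : Fin 2 → ℝ} (hξ : unitVec ξ) {Um Up : MHDState}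
    (hm : Um ∈ Gset) (hp : Up ∈ Gset) {σm σp : ℝ} (hσm : σm ≤ alphaL pfun d2le3 ξ Um Up)
    (hσp : alphaR pfun d2le3 ξ Up Um ≤ σp) (h0 : σm ≤ 0) (hlt : σm < σp) (vs Bs : Fin 3 → ℝ) :
    dot8 (hllFlux pfun d2le3 ξ Um Up σm σp) (nstar vs Bs)
      ≤ dirDot d2le3 ξ (vel Um) * (kinPart Um vs + intE Um) + dirDot d2le3 ξ vs * magPart Um Bs
        + (waveC pfun d2le3 ξ Um - σm) * energyPart Um vs Bs
        + dirDot d2le3 ξ (fun k => (σp * magB Um k - σm * magB Up k) / (σp - σm)) * dot3 vs Bs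
        - dirDot d2le3 ξ vs * (sq3 Bs / 2) := by
  have hd : 0 < σp - σm := sub_pos.2 hlt
  have h := two_state_nonneg pfun hξ hm hp hσm hσp vs Bs
  have hfm := le_of_abs_le (abs_waveForm_le pfun hξ hm vs Bs)
  have hflux := dot8_nstar_flux pfun hm.1 ξ vs Bs
  simp only [hllFlux, dot8_smul, dot8_add, dot8_sub, dot8_nstar_state hm.1,
    dot8_nstar_state hp.1]
  set Fm := dot8 (dirFlux pfun d2le3 ξ Um) (nstar vs Bs)
  set Fp := dot8 (dirFlux pfun d2le3 ξ Up) (nstar vs Bs)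
  have hdir : dirDot d2le3 ξ (fun k => (σp * magB Um k - σm * magB Up k) / (σp - σm))
      = (σp * dirDot d2le3 ξ (magB Um) - σm * dirDot d2le3 ξ (magB Up)) / (σp - σm) := by
    simp only [dirDot_two]; ring
  have hsplit : (σp - σm)⁻¹ * (σp * Fm - σm * Fp + σm * σp *
        (energyPart Up vs Bs - sq3 Bs / 2 - (energyPart Um vs Bs - sq3 Bs / 2)))
      = Fm - σm * energyPart Um vs Bs + σm / (σp - σm) *
        (σp * energyPart Up vs Bs - σm * energyPart Um vs Bs - Fp + Fm) := by
    field_simp; ring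
  have hneg : σm / (σp - σm) ≤ 0 := div_nonpos_of_nonpos_of_nonneg h0 hd.le
  have h' := mul_le_mul_of_nonpos_left h hneg
  have hdiv : (σp * dirDot d2le3 ξ (magB Um) - σm * dirDot d2le3 ξ (magB Up)) / (σp - σm)
      * dot3 vs Bs = dirDot d2le3 ξ (magB Um) * dot3 vs Bs + σm / (σp - σm) *
        -((dirDot d2le3 ξ (magB Up) - dirDot d2le3 ξ (magB Um)) * dot3 vs Bs) := by
    field_simp; ring
  rw [hsplit, hdir, hdiv]
  linarith

/-- A symmetrization estimate for weighted sums whose weighted mean vanishes. -/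
lemma symmetrized_sum_le {ι : Type*} [Fintype ι] {s g m t : ι → ℝ} {G D : ι → ι → ℝ}
    (hs : ∀ j, 0 ≤ s j) (hS : 0 < ∑ j, s j) (hg : ∑ j, s j * g j = 0)
    (hG : ∀ j i, G j i = -G i j) (hD : ∀ j i, D j i = D i j)
    (hpair : ∀ j i, ((g j - g i) - G j i) * (m j - m i) ≤ 2 * D j i * (t j + t i)) :
    ∑ j, s j * (g j * m j) ≤ ∑ j, s j * (((∑ i, s i)⁻¹ * ∑ i, s i * G j i) * m j
      + (2 * (∑ i, s i)⁻¹ * ∑ i, s i * D j i) * t j) := by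
  set S := ∑ j, s j with hSdef
  have hsum : ∑ j, ∑ i, s j * s i * (((g j - g i) - G j i) * (m j - m i))
      ≤ ∑ j, ∑ i, s j * s i * (2 * D j i * (t j + t i)) :=
    Finset.sum_le_sum fun j _ => Finset.sum_le_sum fun i _ =>
      mul_le_mul_of_nonneg_left (hpair j i) (mul_nonneg (hs j) (hs i))
  have hprod : ∀ x y : ι → ℝ, ∑ j, ∑ i, (s j * x j) * (s i * y i)
      = (∑ j, s j * x j) * ∑ i, s i * y i := fun x y => (Finset.sum_mul_sum _ _ _ _).symm
  have hgm : ∑ j, ∑ i, s j * s i * ((g j - g i) * (m j - m i))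
      = 2 * S * ∑ j, s j * (g j * m j) := by
    have e : ∀ j i, s j * s i * ((g j - g i) * (m j - m i))
        = (s j * (g j * m j)) * (s i * 1) - (s j * g j) * (s i * m i)
          - (s j * m j) * (s i * g i) + (s j * 1) * (s i * (g i * m i)) := fun j i => by ring
    simp only [e, Finset.sum_add_distrib, Finset.sum_sub_distrib]
    rw [hprod (fun j => g j * m j) (fun _ => 1), hprod g m, hprod m g,
      hprod (fun _ => 1) (fun j => g j * m j), hg]
    simp only [mul_one, ← hSdef]; ring
  have hGm : ∑ j, ∑ i, s j * s i * (G j i * (m j - m i))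
      = 2 * ∑ j, s j * ((∑ i, s i * G j i) * m j) := by
    have e : ∀ j i, s j * s i * (G j i * (m j - m i))
        = s j * s i * (G j i * m j) + s i * s j * (G i j * m i) := fun j i => by
      rw [hG i j]; ring
    simp only [e, Finset.sum_add_distrib]
    rw [Finset.sum_comm (f := fun j i => s i * s j * (G i j * m i)), two_mul]
    simp only [Finset.sum_mul, Finset.mul_sum, mul_assoc]
  have hDt : ∑ j, ∑ i, s j * s i * (2 * D j i * (t j + t i))
      = 4 * ∑ j, s j * ((∑ i, s i * D j i) * t j) := by
    have e : ∀ j i, s j * s i * (2 * D j i * (t j + t i))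
        = 2 * (s j * (s i * (D j i * t j))) + 2 * (s i * (s j * (D i j * t i))) := fun j i => by
      rw [hD i j]; ring
    simp only [e, Finset.sum_add_distrib]
    rw [Finset.sum_comm (f := fun j i => 2 * (s i * (s j * (D i j * t i))))]
    simp only [← Finset.mul_sum, Finset.sum_mul, mul_assoc]
    ring
  have e : ∀ j i, s j * s i * (((g j - g i) - G j i) * (m j - m i))
      = s j * s i * ((g j - g i) * (m j - m i)) - s j * s i * (G j i * (m j - m i)) :=
    fun j i => by ring
  simp only [e, Finset.sum_sub_distrib] at hsum
  rw [hgm, hGm, hDt] at hsum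
  have hR : ∑ j, s j * ((S⁻¹ * ∑ i, s i * G j i) * m j + (2 * S⁻¹ * ∑ i, s i * D j i) * t j)
      = S⁻¹ * (∑ j, s j * ((∑ i, s i * G j i) * m j)
        + 2 * ∑ j, s j * ((∑ i, s i * D j i) * t j)) := by
    rw [mul_add, Finset.mul_sum, Finset.mul_sum, Finset.mul_sum, ← Finset.sum_add_distrib]
    exact Finset.sum_congr rfl fun j _ => by ring
  rw [hR, ← div_eq_inv_mul, le_div_iff₀ hS]
  linarith

lemma sq_sum_sub_le {ξ η : Fin 2 → ℝ} (hξ : unitVec ξ) (hη : unitVec η) :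
    ∑ k, (ξ k - η k) ^ 2 ≤ (2 : ℝ) ^ 2 := by
  simp only [unitVec, Fin.sum_univ_two] at *
  nlinarith [sq_nonneg (ξ 0 + η 0), sq_nonneg (ξ 1 + η 1)]

lemma sum_mul_dirDot_eq_zero {N : ℕ} {len : Fin N → ℝ} {ξ : Fin N → Fin 2 → ℝ}
    (hGreen : (∑ j, len j • ξ j) = 0) (w : Fin 3 → ℝ) :
    ∑ j, len j * dirDot d2le3 (ξ j) w = 0 := by
  have h0 : ∑ j, len j * ξ j 0 = 0 := by simpa using congrFun hGreen 0
  have h1 : ∑ j, len j * ξ j 1 = 0 := by simpa using congrFun hGreen 1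
  have e : ∀ j, len j * dirDot d2le3 (ξ j) w
      = (len j * ξ j 0) * w 0 + (len j * ξ j 1) * w 1 := fun j => by rw [dirDot_two]; ring
  simp only [e, Finset.sum_add_distrib, ← Finset.sum_mul, h0, h1, zero_mul, add_zero]

/-- The flux part through a closed boundary is controlled by the speeds `α̂`. -/
lemma boundary_sum_le (pfun : ℝ → ℝ → ℝ) {N : ℕ} (hN : 1 ≤ N) {len : Fin N → ℝ}
    (hlen : ∀ j, 0 < len j) {ξ : Fin N → Fin 2 → ℝ} (hξ : ∀ j, unitVec (ξ j))
    (hGreen : (∑ j, len j • ξ j) = 0) {U : Fin N → MHDState} (hU : ∀ j, U j ∈ Gset)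
    (vs Bs : Fin 3 → ℝ) :
    ∑ j, len j * (dirDot d2le3 (ξ j) (vel (U j)) * (kinPart (U j) vs + intE (U j))
        + dirDot d2le3 (ξ j) vs * magPart (U j) Bs
        + waveC pfun d2le3 (ξ j) (U j) * energyPart (U j) vs Bs)
      ≤ ∑ j, len j * (alphaHat pfun d2le3 len ξ U j * energyPart (U j) vs Bs) := by
  have : Nonempty (Fin N) := ⟨⟨0, hN⟩⟩
  have hS : 0 < ∑ j, len j := Finset.sum_pos (fun j _ => hlen j) Finset.univ_nonempty
  have hsym := symmetrized_sum_le (s := len) (g := fun j => dirDot d2le3 (ξ j) vs)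
    (m := fun j => magPart (U j) Bs) (t := fun j => energyPart (U j) vs Bs)
    (G := fun j i => dirDot d2le3 (fun k => ξ j k - ξ i k) (roeV (U j) (U i)))
    (D := fun j i => jumpB (U j) (U i)) (fun j => (hlen j).le) hS
    (sum_mul_dirDot_eq_zero hGreen vs)
    (fun j i => by simp only [roeV_comm (U j) (U i), dirDot_two]; ring)
    (fun j i => jumpB_comm _ _)
    (fun j i => by
      have h := le_of_abs_le (abs_roe_deviation_mul_jump_le (hU j) (hU i) zero_le_two
        (sq_sum_sub_le (hξ j) (hξ i)) vs Bs)
      rwa [show dirDot d2le3 (fun k => ξ j k - ξ i k) vs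
        = dirDot d2le3 (ξ j) vs - dirDot d2le3 (ξ i) vs by simp only [dirDot_two]; ring] at h)
  have hterm : ∀ j, len j * (dirDot d2le3 (ξ j) (vel (U j)) * (kinPart (U j) vs + intE (U j))
        + waveC pfun d2le3 (ξ j) (U j) * energyPart (U j) vs Bs)
      + len j * (((∑ i, len i)⁻¹ * ∑ i, len i *
          dirDot d2le3 (fun k => ξ j k - ξ i k) (roeV (U j) (U i))) * magPart (U j) Bs
        + (2 * (∑ i, len i)⁻¹ * ∑ i, len i * jumpB (U j) (U i)) * energyPart (U j) vs Bs)
      ≤ len j * (alphaHat pfun d2le3 len ξ U j * energyPart (U j) vs Bs) := by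
    intro j
    rw [← mul_add]
    refine mul_le_mul_of_nonneg_left ?_ (hlen j).le
    unfold alphaHat
    change _ ≤ (max _ _ + _ + 2 * (∑ i, len i)⁻¹ * ∑ i, len i * jumpB (U j) (U i)) * _
    have a₁ := mul_le_mul_of_nonneg_right (le_max_left (dirDot d2le3 (ξ j) (vel (U j)))
      ((∑ i, len i)⁻¹ * ∑ i, len i *
        dirDot d2le3 (fun k => ξ j k - ξ i k) (roeV (U j) (U i))))
      (add_nonneg (kinPart_nonneg (hU j).1 vs) (hU j).2.le)
    have a₂ := mul_le_mul_of_nonneg_right (le_max_right (dirDot d2le3 (ξ j) (vel (U j)))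
      ((∑ i, len i)⁻¹ * ∑ i, len i *
        dirDot d2le3 (fun k => ξ j k - ξ i k) (roeV (U j) (U i)))) (magPart_nonneg (U j) Bs)
    set M := max (dirDot d2le3 (ξ j) (vel (U j))) ((∑ i, len i)⁻¹ * ∑ i, len i *
        dirDot d2le3 (fun k => ξ j k - ξ i k) (roeV (U j) (U i)))
    have c : M * energyPart (U j) vs Bs
        = M * (kinPart (U j) vs + intE (U j)) + M * magPart (U j) Bs := by
      unfold energyPart; ring
    linarith
  refine le_trans ?_ (Finset.sum_le_sum fun j _ => hterm j)
  rw [Finset.sum_add_distrib]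
  refine le_trans (le_of_eq ?_) (add_le_add_right hsym _)
  rw [← Finset.sum_add_distrib]
  exact Finset.sum_congr rfl fun j _ => by ring

lemma dirFlux_dens (pfun : ℝ → ℝ → ℝ) (ξ : Fin 2 → ℝ) (U : MHDState) :
    dens (dirFlux pfun d2le3 ξ U) = dens U * dirDot d2le3 ξ (vel U) := by
  simp [dens, dirFlux, Fin.sum_univ_two, dirDot_two, flux, mk]
  ring

lemma hllFlux_dens_le (pfun : ℝ → ℝ → ℝ) {ξ : Fin 2 → ℝ} {Um Up : MHDState}
    (hm : Um ∈ Gset) (hp : Up ∈ Gset) {σm σp : ℝ} (hσm : σm ≤ alphaL pfun d2le3 ξ Um Up)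
    (hσp : alphaR pfun d2le3 ξ Up Um ≤ σp) (h0 : σm ≤ 0) (hlt : σm < σp) :
    dens (hllFlux pfun d2le3 ξ Um Up σm σp) ≤ dens Um * (dirDot d2le3 ξ (vel Um) - σm) := by
  have hvm : σm ≤ dirDot d2le3 ξ (vel Um) := by
    have h₁ := waveC_nonneg pfun ξ Um
    have h₂ := jumpB_nonneg Um Up
    have h₃ := min_le_left (dirDot d2le3 ξ (vel Um)) (dirDot d2le3 ξ (roeV Um Up))
    unfold alphaL at hσm
    change _ ≤ min _ _ - _ - jumpB Um Up at hσm
    linarith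
  have hvp : dirDot d2le3 ξ (vel Up) ≤ σp := by
    have h₁ := waveC_nonneg pfun ξ Up
    have h₂ := jumpB_nonneg Up Um
    have h₃ := le_max_left (dirDot d2le3 ξ (vel Up)) (dirDot d2le3 ξ (roeV Up Um))
    unfold alphaR at hσp
    change max _ _ + _ + jumpB Up Um ≤ _ at hσp
    linarith
  have hd : 0 < σp - σm := sub_pos.2 hlt
  have e : dens (hllFlux pfun d2le3 ξ Um Up σm σp) = (σp - σm)⁻¹ *
      (σp * dens (dirFlux pfun d2le3 ξ Um) - σm * dens (dirFlux pfun d2le3 ξ Up)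
        + σm * σp * (dens Up - dens Um)) := by
    simp [hllFlux, dens]
  rw [e, dirFlux_dens, dirFlux_dens, ← div_eq_inv_mul, div_le_iff₀ hd]
  nlinarith [mul_nonneg (mul_nonneg (neg_nonneg.2 h0) hm.1.le) (sub_nonneg.2 hvm),
    mul_nonneg (mul_nonneg (neg_nonneg.2 h0) hp.1.le) (sub_nonneg.2 hvp)]

lemma dirDot_vel_le_alphaHat (pfun : ℝ → ℝ → ℝ) {N : ℕ} {len : Fin N → ℝ}
    (hlen : ∀ j, 0 < len j) (ξ : Fin N → Fin 2 → ℝ) (U : Fin N → MHDState) (j : Fin N) :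
    dirDot d2le3 (ξ j) (vel (U j)) ≤ alphaHat pfun d2le3 len ξ U j := by
  have h₁ := waveC_nonneg pfun (ξ j) (U j)
  have h₂ : 0 ≤ 2 * (∑ i, len i)⁻¹ * ∑ i, len i * jumpB (U j) (U i) :=
    mul_nonneg (mul_nonneg zero_le_two (inv_nonneg.2 (Finset.sum_nonneg fun i _ => (hlen i).le)))
      (Finset.sum_nonneg fun i _ => mul_nonneg (hlen i).le (jumpB_nonneg _ _))
  have h₃ := le_max_left (dirDot d2le3 (ξ j) (vel (U j))) ((∑ i, len i)⁻¹ * ∑ i, len i *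
    dirDot d2le3 (fun k => ξ j k - ξ i k) (roeV (U j) (U i)))
  unfold alphaHat
  change _ ≤ max _ _ + _ + 2 * (∑ i, len i)⁻¹ * ∑ i, len i * jumpB (U j) (U i)
  linarith

/-- Theorem 4.4: weak positivity of the high-order conservative 2D scheme
(one cell, one forward-Euler step). -/
theorem twoD_high_order_conservative_weak_positivity
    (pfun : ℝ → ℝ → ℝ) (hEOS : IsEOS pfun)
    {N : ℕ} (hN : 1 ≤ N) {Q : ℕ} (hQ : 1 ≤ Q) {Qt : ℕ}
    (areaK : ℝ) (hK : 0 < areaK)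
    (len : Fin N → ℝ) (hlen : ∀ j, 0 < len j)
    (ξ : Fin N → Fin 2 → ℝ) (hξ : ∀ j, unitVec (ξ j))
    (hGreen : (∑ j, len j • ξ j) = 0)
    (ω : Fin Q → ℝ) (hω : ∀ q, 0 < ω q) (hωsum : (∑ q, ω q) = 1)
    (Uint Uext : Fin N → Fin Q → MHDState)
    (hUint : ∀ j q, Uint j q ∈ Gset) (hUext : ∀ j q, Uext j q ∈ Gset)
    (Ut : Fin Qt → MHDState) (hUt : ∀ q, Ut q ∈ Gset)
    (wt : Fin Qt → ℝ) (hwt : ∀ q, 0 < wt q)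
    (wb : Fin N → Fin Q → ℝ) (hwb : ∀ j q, 0 < wb j q)
    (hwsum : (∑ q, wt q) + (∑ j, ∑ q, wb j q) = 1)
    (Ubar : MHDState)
    (hUbar : Ubar = (∑ q, wt q • Ut q) + ∑ j, ∑ q, wb j q • Uint j q)
    (σr σl : Fin N → Fin Q → ℝ)
    (hr : ∀ j q, alphaR pfun d2le3 (ξ j) (Uext j q) (Uint j q) ≤ σr j q)
    (hl : ∀ j q, σl j q ≤ alphaL pfun d2le3 (ξ j) (Uint j q) (Uext j q))
    (Δt : ℝ) (hΔt : 0 < Δt)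
    (hCFL : ∀ j q, Δt * (len j / areaK) *
        (alphaHat pfun d2le3 len ξ (fun i => Uint i q) j - min (σl j q) 0)
        < wb j q / ω q)
    (div : ℝ)
    (hdiv : div = areaK⁻¹ *
      ∑ j, ∑ q, len j * ω q * dirDot d2le3 (ξ j)
        (fun k => (max (σr j q) 0 * magB (Uint j q) k
            - min (σl j q) 0 * magB (Uext j q) k)
          / (max (σr j q) 0 - min (σl j q) 0)))
    (Ubar' : MHDState)
    (hUbar' : Ubar' = Ubar - (Δt / areaK) •
      (∑ j, ∑ q, (len j * ω q) •
        hllFlux pfun d2le3 (ξ j) (Uint j q) (Uext j q)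
          (min (σl j q) 0) (max (σr j q) 0))) :
    0 < dens Ubar' ∧
      intE Ubar' > -(Δt * (dens Ubar')⁻¹ * dot3 (mom Ubar') (magB Ubar') * div) ∧
      (div = 0 → Ubar' ∈ Gset) := by
  have hJ : (Finset.univ : Finset (Fin N)).Nonempty := ⟨⟨0, hN⟩, Finset.mem_univ _⟩
  have hQ' : (Finset.univ : Finset (Fin Q)).Nonempty := ⟨⟨0, hQ⟩, Finset.mem_univ _⟩
  have hl' : ∀ j q, min (σl j q) 0 ≤ alphaL pfun d2le3 (ξ j) (Uint j q) (Uext j q) :=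
    fun j q => (min_le_left _ _).trans (hl j q)
  have hr' : ∀ j q, alphaR pfun d2le3 (ξ j) (Uext j q) (Uint j q) ≤ max (σr j q) 0 :=
    fun j q => (hr j q).trans (le_max_left _ _)
  have hlt : ∀ j q, min (σl j q) 0 < max (σr j q) 0 := fun j q =>
    (hl' j q).trans_lt ((alphaR_sub_alphaL_pos hEOS (ξ j) (hUint j q) (hUext j q)).trans_le
      (hr' j q))
  have hD : 0 < Δt / areaK := div_pos hΔt hK
  have hspeed : ∀ j q, Δt / areaK * (len j * ω q *
      (alphaHat pfun d2le3 len ξ (fun i => Uint i q) j - min (σl j q) 0)) < wb j q := by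
    intro j q
    have h := (lt_div_iff₀ (hω q)).1 (hCFL j q)
    refine lt_of_eq_of_lt ?_ h
    ring
  have hdens : 0 < dens Ubar' := by
    have e : dens Ubar' = (∑ q, wt q * dens (Ut q)) + ∑ j, ∑ q, (wb j q * dens (Uint j q)
        - Δt / areaK * (len j * ω q * dens (hllFlux pfun d2le3 (ξ j) (Uint j q) (Uext j q)
          (min (σl j q) 0) (max (σr j q) 0)))) := by
      rw [hUbar', hUbar]
      simp only [dens, Pi.sub_apply, Pi.add_apply, Finset.sum_apply, Pi.smul_apply, smul_eq_mul,
        Finset.sum_sub_distrib, Finset.mul_sum]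
      ring
    rw [e]
    refine add_pos_of_nonneg_of_pos
      (Finset.sum_nonneg fun q _ => mul_nonneg (hwt q).le (hUt q).1.le)
      (Finset.sum_pos (fun j _ => Finset.sum_pos (fun q _ => ?_) hQ') hJ)
    have h₁ := hllFlux_dens_le pfun (hUint j q) (hUext j q) (hl' j q) (hr' j q)
      (min_le_right _ _) (hlt j q)
    have h₂ := dirDot_vel_le_alphaHat pfun hlen ξ (fun i => Uint i q) j
    have hρ := (hUint j q).1
    have hlo := mul_pos (hlen j) (hω q)
    have h₃ : dens (Uint j q) * (dirDot d2le3 (ξ j) (vel (Uint j q)) - min (σl j q) 0)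
        ≤ dens (Uint j q) *
          (alphaHat pfun d2le3 len ξ (fun i => Uint i q) j - min (σl j q) 0) :=
      mul_le_mul_of_nonneg_left (sub_le_sub_right h₂ _) hρ.le
    have h₄ := mul_le_mul_of_nonneg_left
      (mul_le_mul_of_nonneg_left (h₁.trans h₃) hlo.le) hD.le
    have h₅ := mul_lt_mul_of_pos_right (hspeed j q) hρ
    linarith
  have hmain : ∀ vs Bs : Fin 3 → ℝ,
      -(Δt * div * dot3 vs Bs) < dot8 Ubar' (nstar vs Bs) + sq3 Bs / 2 := by
    intro vs Bs
    have e : dot8 Ubar' (nstar vs Bs) + sq3 Bs / 2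
        = (∑ q, wt q * energyPart (Ut q) vs Bs)
          + (∑ j, ∑ q, wb j q * energyPart (Uint j q) vs Bs)
          - Δt / areaK * ∑ j, ∑ q, len j * ω q *
            dot8 (hllFlux pfun d2le3 (ξ j) (Uint j q) (Uext j q)
              (min (σl j q) 0) (max (σr j q) 0)) (nstar vs Bs) := by
      rw [hUbar', hUbar]
      simp only [dot8_sub, dot8_add, dot8_sum, dot8_smul, dot8_nstar_state (hUt _).1,
        dot8_nstar_state (hUint _ _).1, mul_sub, Finset.sum_sub_distrib, ← Finset.sum_mul]
      linear_combination -(sq3 Bs / 2) * hwsum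
    have hflux : ∑ j, ∑ q, len j * ω q *
        dot8 (hllFlux pfun d2le3 (ξ j) (Uint j q) (Uext j q)
          (min (σl j q) 0) (max (σr j q) 0)) (nstar vs Bs)
        ≤ (∑ j, ∑ q, len j * ω q * ((alphaHat pfun d2le3 len ξ (fun i => Uint i q) j
            - min (σl j q) 0) * energyPart (Uint j q) vs Bs))
          + areaK * div * dot3 vs Bs := by
      rw [hdiv, mul_inv_cancel_left₀ hK.ne', Finset.sum_comm,
        Finset.sum_comm (f := fun j q => len j * ω q * ((alphaHat pfun d2le3 len ξ
          (fun i => Uint i q) j - min (σl j q) 0) * energyPart (Uint j q) vs Bs)),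
        Finset.sum_comm (f := fun j q => len j * ω q * dirDot d2le3 (ξ j) _), Finset.sum_mul,
        ← Finset.sum_add_distrib]
      refine Finset.sum_le_sum fun q _ => ?_
      have hb := boundary_sum_le pfun hN hlen hξ hGreen (U := fun i => Uint i q)
        (fun j => hUint j q) vs Bs
      have hz := sum_mul_dirDot_eq_zero hGreen vs
      have hj := Finset.sum_le_sum fun j (_ : j ∈ Finset.univ) =>
        mul_le_mul_of_nonneg_left (dot8_hllFlux_le pfun (hξ j) (hUint j q) (hUext j q) (hl' j q)
          (hr' j q) (min_le_right _ _) (hlt j q) vs Bs) (hlen j).le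
      have hq := mul_le_mul_of_nonneg_left hj (hω q).le
      have hq' := mul_le_mul_of_nonneg_left hb (hω q).le
      have hz' : ω q * ((∑ j, len j * dirDot d2le3 (ξ j) vs) * -(sq3 Bs / 2)) = 0 := by
        rw [hz]; ring
      rw [Finset.sum_mul, ← Finset.sum_add_distrib]
      rw [← sub_nonneg] at hq hq' ⊢
      have hsum := add_nonneg hq hq'
      refine hsum.trans (le_of_eq (eq_of_sub_eq_zero (Eq.trans ?_ hz')))
      simp only [Finset.mul_sum, Finset.sum_mul, ← Finset.sum_sub_distrib,
        ← Finset.sum_add_distrib]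
      exact Finset.sum_congr rfl fun j _ => by ring
    have hpos : 0 < ∑ j, ∑ q, (wb j q * energyPart (Uint j q) vs Bs
        - Δt / areaK * (len j * ω q * ((alphaHat pfun d2le3 len ξ (fun i => Uint i q) j
            - min (σl j q) 0) * energyPart (Uint j q) vs Bs))) := by
      refine Finset.sum_pos (fun j _ => Finset.sum_pos (fun q _ => ?_) hQ') hJ
      have h := mul_lt_mul_of_pos_right (hspeed j q) (energyPart_pos (hUint j q) vs Bs)
      linarith
    simp only [Finset.sum_sub_distrib, ← Finset.mul_sum] at hpos
    have hnn : 0 ≤ ∑ q, wt q * energyPart (Ut q) vs Bs :=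
      Finset.sum_nonneg fun q _ => mul_nonneg (hwt q).le (energyPart_pos (hUt q) vs Bs).le
    have h := mul_le_mul_of_nonneg_left hflux hD.le
    have hc : Δt / areaK * (areaK * div * dot3 vs Bs) = Δt * div * dot3 vs Bs := by
      field_simp
    rw [e]
    rw [mul_add, hc] at h
    linarith
  have hint : intE Ubar' > -(Δt * (dens Ubar')⁻¹ * dot3 (mom Ubar') (magB Ubar') * div) := by
    have h := hmain (vel Ubar') (magB Ubar')
    rw [dot8_nstar_self hdens, sub_add_cancel] at h
    have hv : dot3 (vel Ubar') (magB Ubar')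
        = (dens Ubar')⁻¹ * dot3 (mom Ubar') (magB Ubar') := by
      simp only [dot3_eq, vel]; ring
    rw [hv] at h
    refine lt_of_eq_of_lt ?_ h
    ring
  refine ⟨hdens, hint, fun h0 => ⟨hdens, ?_⟩⟩
  simpa [h0] using hint

end MHD
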